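/- In Sym, for every composition I: Φ^I = Σ_{J ⪰ I} (−1)^{ℓ(J)−ℓ(I)} (π(I)/ℓ(J,I)) S^J and S^I = Σ_{J ⪰ I} (1/sp(J,I)) Φ^J. Here π(K) := k₁k₂⋯k_s denotes the product of the parts of a composition K, sp(K) := ℓ(K)!·π(K), and for J ⪰ I with canonical decomposition J = J₁⋯J_m into consecutive blocks with |J_p| = i_p, ℓ(J,I) := Π_p ℓ(J_p) and sp(J,I) := Π_p sp(J_p). -/

import Mathlib

open Finset

namespace NCSF

noncomputable section

/-- `Sym = ℚ⟨S₁,S₂,S₃,…⟩`, the free associative algebra over `ℚ` on countably many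
noncommuting generators, the generator of index `n : ℕ` representing `S (n+1)`. -/
abbrev Sym : Type := FreeAlgebra ℚ ℕ

/-- The complete homogeneous noncommutative symmetric functions: `S 0 = 1` and
`S (n+1)` is the `n`-th generator of the free algebra. -/
def S : ℕ → Sym
  | 0 => 1
  | n + 1 => FreeAlgebra.ι ℚ n

/-- `S^I = S_{i₁} ⋯ S_{i_r}` for a list `I = [i₁, …, i_r]`. -/
def SProd (L : List ℕ) : Sym := (L.map S).prod

/-- The set of partial sums `i₁ + ⋯ + i_k` (`1 ≤ k ≤ length`) of a list. -/
def psums (L : List ℕ) : Finset ℕ :=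
  (Finset.range L.length).image fun k => (L.take (k + 1)).sum

/-- The noncommutative ribbon Schur function
`R_I = ∑_{J ⪯ I} (−1)^{ℓ(I)−ℓ(J)} S^J`, the sum being over the compositions `J`
of `|I|` that are coarser than `I` (every partial sum of `J` is a partial sum of `I`). -/
def Ribbon (L : List ℕ) : Sym :=
  ∑ J : Composition L.sum,
    if psums J.blocks ⊆ psums L then ((-1 : ℚ) ^ (L.length - J.length)) • SProd J.blocks
    else 0


/-- The noncommutative power sums of the second kind
`Φ_n = ∑_{|J|=n} (−1)^{ℓ(J)−1} (n/ℓ(J)) S^J`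
(the coefficient of `tⁿ` in `n·log(1 + ∑_{k≥1} S_k t^k)`). -/
def Phi (n : ℕ) : Sym :=
  ∑ J : Composition n,
    ((-1 : ℚ) ^ (J.length - 1) * (n : ℚ) / (J.length : ℚ)) • SProd J.blocks

/-- `Φ^I = Φ_{i₁} ⋯ Φ_{i_r}`. -/
def PhiProd (L : List ℕ) : Sym := (L.map Phi).prod

/-- The number of positions of `J` whose cumulative sum is `≤ s`. -/
def countLe (J : List ℕ) (s : ℕ) : ℕ :=
  ((Finset.range J.length).filter fun k => (J.take (k + 1)).sum ≤ s).card

/-- `ℓ(J_p)`: the length of the `p`-th block (`0 ≤ p < ℓ(I)`) of the canonical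
decomposition of `J ⪰ I`. -/
def blockLen (J I : List ℕ) (p : ℕ) : ℕ :=
  countLe J ((I.take (p + 1)).sum) - countLe J ((I.take p).sum)

/-- `ℓ(J,I) = ∏_p ℓ(J_p)`. -/
def ellP (J I : List ℕ) : ℕ :=
  ∏ p ∈ Finset.range I.length, blockLen J I p

/-- `sp(J,I) = ∏_p sp(J_p)` where `sp(K) = ℓ(K)!·π(K)`; since the parts of the
blocks of `J` multiply to `π(J)`, this is `π(J)·∏_p ℓ(J_p)!`. -/
def spP (J I : List ℕ) : ℕ :=
  J.prod * ∏ p ∈ Finset.range I.length, Nat.factorial (blockLen J I p)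

/-!
Both expansions hold for any sequence `s` in a `ℚ`-algebra. Expanding a product of coefficients of
`f(∑_{k≥1} s_k t^k)`, one factor for each part of `I`, and concatenating the compositions of the
parts yields exactly the compositions `J ⪰ I`, each with coefficient `∏_p f_{ℓ(J_p)}`. For
`f = log(1 + X)` these products are `Φ^I / π(I)`. Substituting a noncommutative series without
constant term into one-variable series is an algebra homomorphism compatible with composition, so
`exp(log(1 + X)) = 1 + X` shows that `f = exp` expands `s_n` in terms of the elements `Φ_k / k`.
-/

section PartialSums

theorem mem_psums {L : List ℕ} {s : ℕ} :
    s ∈ psums L ↔ ∃ A B, A ≠ [] ∧ A ++ B = L ∧ A.sum = s := by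
  simp only [psums, mem_image, mem_range]
  constructor
  · rintro ⟨k, hk, rfl⟩
    refine ⟨L.take (k + 1), L.drop (k + 1), ?_, L.take_append_drop _, rfl⟩
    simpa using List.ne_nil_of_length_pos (by omega)
  · rintro ⟨A, B, hA, rfl, rfl⟩
    have hA' : 0 < A.length := List.length_pos_iff.mpr hA
    exact ⟨A.length - 1, by rw [List.length_append]; omega, by simp [Nat.sub_add_cancel hA']⟩

theorem psums_cons (a : ℕ) (L : List ℕ) :
    psums (a :: L) = insert a ((psums L).image (a + ·)) := by
  simp only [psums, List.length_cons, range_add_one', image_insert, map_eq_image, image_image]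
  rfl

theorem psums_append (A B : List ℕ) :
    psums (A ++ B) = psums A ∪ (psums B).image (A.sum + ·) := by
  induction A with
  | nil => simp [psums]
  | cons a A ih =>
    simp [psums_cons, ih, image_union, image_image, Function.comp_def, add_assoc]

theorem le_sum_of_mem_psums {L : List ℕ} {s : ℕ} (hs : s ∈ psums L) : s ≤ L.sum := by
  obtain ⟨A, B, -, rfl, rfl⟩ := mem_psums.mp hs
  simp

theorem sum_mem_psums {L : List ℕ} (hL : L ≠ []) : L.sum ∈ psums L :=
  mem_psums.mpr ⟨L, [], hL, L.append_nil, rfl⟩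

theorem pos_of_mem_psums {n : ℕ} (I : Composition n) {s : ℕ} (hs : s ∈ psums I.blocks) :
    0 < s := by
  obtain ⟨A, B, hA, hAB, rfl⟩ := mem_psums.mp hs
  exact List.sum_pos A (fun i hi => I.blocks_pos (hAB ▸ List.mem_append_left B hi)) hA

theorem card_psums {n : ℕ} (I : Composition n) : #(psums I.blocks) = I.length := by
  have hmono : StrictMonoOn I.sizeUpTo (Set.Iic I.length) :=
    strictMonoOn_Iic_of_lt_succ fun k hk => I.sizeUpTo_strict_mono hk
  have hinj : Set.InjOn (fun k => I.sizeUpTo (k + 1)) (range I.length) := fun k hk l hl h =>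
    Nat.succ_injective (hmono.injOn (by simpa using hk) (by simpa using hl) h)
  exact (card_image_of_injOn hinj).trans (card_range _)

theorem length_le_of_psums_subset {n : ℕ} {I J : Composition n}
    (h : psums I.blocks ⊆ psums J.blocks) : I.length ≤ J.length := by
  simpa only [card_psums] using card_le_card h

theorem psums_sum_cons_subset_psums_append {n : ℕ} {A : List ℕ} (hA : A ≠ [])
    (I : Composition n) (J : List ℕ) :
    psums (A.sum :: I.blocks) ⊆ psums (A ++ J) ↔ psums I.blocks ⊆ psums J := by
  rw [psums_cons, psums_append, insert_subset_iff]
  constructor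
  · rintro ⟨-, h⟩ s hs
    rcases mem_union.mp (h (mem_image_of_mem _ hs)) with hsA | hsJ
    · have := pos_of_mem_psums I hs
      have := le_sum_of_mem_psums hsA
      omega
    · simpa using hsJ
  · exact fun h => ⟨mem_union_left _ (sum_mem_psums hA),
      (image_subset_image h).trans subset_union_right⟩

end PartialSums

section BlockLengths

theorem countLe_mono (J : List ℕ) : Monotone (countLe J) := fun _ _ hst =>
  card_le_card (monotone_filter_right _ fun _ _ hk => le_trans hk hst)

theorem countLe_cons_add (a : ℕ) (J : List ℕ) (s : ℕ) :
    countLe (a :: J) (a + s) = countLe J s + 1 := by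
  rw [countLe, countLe, card_filter, card_filter, List.length_cons, sum_range_succ']
  simp

theorem countLe_append_sum_add (A J : List ℕ) (s : ℕ) :
    countLe (A ++ J) (A.sum + s) = A.length + countLe J s := by
  induction A with
  | nil => simp
  | cons a A ih =>
    rw [List.cons_append, List.sum_cons, add_assoc, countLe_cons_add, ih, List.length_cons]
    omega

theorem countLe_sum (J : List ℕ) : countLe J J.sum = J.length := by
  simpa [countLe] using countLe_append_sum_add J [] 0

theorem countLe_zero {n : ℕ} (J : Composition n) : countLe J.blocks 0 = 0 := by
  rw [countLe, card_eq_zero, filter_eq_empty_iff]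
  exact fun k hk => (pos_of_mem_psums J (mem_image_of_mem _ hk)).not_ge

theorem countLe_append_sum {n : ℕ} (A : List ℕ) (J : Composition n) :
    countLe (A ++ J.blocks) A.sum = A.length := by
  simpa [countLe_zero] using countLe_append_sum_add A J.blocks 0

theorem blockLen_append_zero {m n : ℕ} (A : Composition m) (J : Composition n) (I : List ℕ) :
    blockLen (A.append J).blocks (m :: I) 0 = A.length := by
  have hm : countLe (A.blocks ++ J.blocks) m = A.length := by
    simpa using countLe_append_sum A.blocks J
  have hzero : countLe (A.blocks ++ J.blocks) 0 = 0 := by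
    simpa using countLe_zero (A.append J)
  simp [blockLen, hm, hzero]

theorem blockLen_append_succ {m n : ℕ} (A : Composition m) (J : Composition n) (I : List ℕ)
    (p : ℕ) : blockLen (A.append J).blocks (m :: I) (p + 1) = blockLen J.blocks I p := by
  have h (s : ℕ) : countLe (A.blocks ++ J.blocks) (m + s) = A.length + countLe J.blocks s := by
    simpa using countLe_append_sum_add A.blocks J.blocks s
  simp only [blockLen, List.take_succ_cons, List.sum_cons, Composition.append_blocks, h,
    Nat.add_sub_add_left]

theorem sum_blockLen {n : ℕ} (I J : Composition n) :
    ∑ p ∈ range I.length, blockLen J.blocks I.blocks p = J.length := by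
  have hmono : Monotone fun p => countLe J.blocks (I.sizeUpTo p) :=
    (countLe_mono J.blocks).comp I.monotone_sizeUpTo
  have hn : countLe J.blocks n = J.length := by simpa using countLe_sum J.blocks
  refine (sum_range_tsub hmono I.length).trans ?_
  simp [hn, countLe_zero]

end BlockLengths

section CompositionSplitting

variable {M : Type*} [AddCommMonoid M]

theorem sum_composition_zero (g : List ℕ → M) : ∑ K : Composition 0, g K.blocks = g [] := by
  have hnil (K : Composition 0) : K.blocks = [] := K.blocks_eq_nil.mpr rfl
  simp [hnil, composition_card]

theorem sum_composition_succ (n : ℕ) (g : List ℕ → M) :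
    ∑ K : Composition (n + 1), g K.blocks =
      ∑ p ∈ antidiagonal n, ∑ K : Composition p.2, g ((p.1 + 1) :: K.blocks) := by
  rw [sum_sigma']
  symm
  refine sum_bij (fun x hx => (⟨(x.1.1 + 1) :: x.2.blocks, ?_, ?_⟩ : Composition (n + 1)))
    (by simp) ?_ ?_ (by simp)
  · rintro i hi
    rcases List.mem_cons.mp hi with rfl | hi
    exacts [Nat.succ_pos _, x.2.blocks_pos hi]
  · have : x.1.1 + x.1.2 = n := by simpa using hx
    simp only [List.sum_cons, Composition.blocks_sum]
    omega
  · rintro ⟨⟨i, j⟩, K⟩ h ⟨⟨i', j'⟩, K'⟩ h' heq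
    simp only [Composition.mk.injEq, List.cons.injEq, add_left_inj] at heq
    obtain ⟨rfl, hK⟩ := heq
    obtain rfl : j = j' := by simpa using congrArg List.sum hK
    obtain rfl : K = K' := Composition.ext hK
    rfl
  · rintro ⟨_ | ⟨_ | i, L⟩, hpos, hsum⟩ -
    · simp at hsum
    · simp at hpos
    · refine ⟨⟨(i, L.sum), ⟨L, fun hi => hpos (List.mem_cons_of_mem _ hi), rfl⟩⟩, ?_, rfl⟩
      simp only [List.sum_cons, mem_sigma, HasAntidiagonal.mem_antidiagonal, mem_univ, and_true]
        at hsum ⊢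
      omega

theorem append_injective (m n : ℕ) :
    Function.Injective fun x : Composition m × Composition n => x.1.append x.2 := by
  rintro ⟨A, J⟩ ⟨A', J'⟩ h
  have hblocks : A.blocks ++ J.blocks = A'.blocks ++ J'.blocks := congrArg Composition.blocks h
  have hlength : A.blocks.length = A'.blocks.length := by
    rw [← countLe_append_sum A.blocks J, ← countLe_append_sum A'.blocks J', hblocks,
      A.blocks_sum, A'.blocks_sum]
  obtain ⟨hA, hJ⟩ := List.append_inj hblocks hlength
  exact Prod.ext (Composition.ext hA) (Composition.ext hJ)

theorem exists_append_eq_iff {m n : ℕ} (hm : m ≠ 0) (L : Composition (m + n)) :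
    (∃ (A : Composition m) (J : Composition n), A.append J = L) ↔ m ∈ psums L.blocks := by
  rw [mem_psums]
  constructor
  · rintro ⟨A, J, rfl⟩
    exact ⟨A.blocks, J.blocks, mt A.blocks_eq_nil.mp hm, rfl, A.blocks_sum⟩
  · rintro ⟨A, B, -, hAB, hA⟩
    have hB : B.sum = n := by
      have := hAB ▸ L.blocks_sum
      rw [List.sum_append] at this
      omega
    exact ⟨⟨A, fun hi => L.blocks_pos (hAB ▸ List.mem_append_left B hi), hA⟩,
      ⟨B, fun hi => L.blocks_pos (hAB ▸ List.mem_append_right A hi), hB⟩, Composition.ext hAB⟩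

theorem sum_sum_append {m n : ℕ} (hm : m ≠ 0) (g : Composition (m + n) → M) :
    ∑ A : Composition m, ∑ J : Composition n, g (A.append J) =
      ∑ L : Composition (m + n) with m ∈ psums L.blocks, g L := by
  rw [← Fintype.sum_prod_type', ← sum_image (append_injective m n).injOn]
  congr 1
  ext L
  simp [← exists_append_eq_iff hm]

end CompositionSplitting

section GeneratingSeries

open PowerSeries

section CompositionSum

variable {R A : Type*} [CommSemiring R] [Semiring A] [Algebra R A]

/-- The coefficient of `tⁿ` in `f(∑_{k≥1} a_k t^k)`, where the `a_k` need not commute with each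
other; the value `a 0` is ignored. -/
def compositionSum (f : R⟦X⟧) (a : ℕ → A) (n : ℕ) : A :=
  ∑ K : Composition n, coeff K.length f • (K.blocks.map a).prod

theorem compositionSum_zero (f : R⟦X⟧) (a : ℕ → A) :
    compositionSum f a 0 = algebraMap R A (constantCoeff f) := by
  have h := sum_composition_zero fun L => coeff L.length f • (L.map a).prod
  simpa [compositionSum, Algebra.algebraMap_eq_smul_one] using h

theorem compositionSum_succ (f : R⟦X⟧) (a : ℕ → A) (n : ℕ) :
    compositionSum (X * f) a (n + 1) =
      ∑ p ∈ antidiagonal n, a (p.1 + 1) * compositionSum f a p.2 := by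
  have h := sum_composition_succ n fun L => coeff L.length (X * f) • (L.map a).prod
  simpa [compositionSum, mul_sum] using h

/-- The contribution of `J` to the expansion of `∏_p compositionSum f a i_p`, namely
`(∏_p f_{ℓ(J_p)}) a^J` if `J ⪰ I` and `0` otherwise. -/
def refinementTerm (f : R⟦X⟧) (a : ℕ → A) (I J : List ℕ) : A :=
  if psums I ⊆ psums J then
    (∏ p ∈ range I.length, coeff (blockLen J I p) f) • (J.map a).prod
  else 0

theorem mem_psums_of_refinementTerm_cons_ne_zero {f : R⟦X⟧} {a : ℕ → A} {i : ℕ} {I J : List ℕ}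
    (h : refinementTerm f a (i :: I) J ≠ 0) : i ∈ psums J :=
  (ite_ne_right_iff.mp h).1 (by simp [psums_cons])

theorem refinementTerm_cons_append {m n : ℕ} (hm : m ≠ 0) (f : R⟦X⟧) (a : ℕ → A)
    (I : Composition n) (B : Composition m) (J : Composition n) :
    refinementTerm f a (m :: I.blocks) (B.append J).blocks =
      coeff B.length f • (B.blocks.map a).prod * refinementTerm f a I.blocks J.blocks := by
  have hsub : psums (m :: I.blocks) ⊆ psums (B.append J).blocks ↔
      psums I.blocks ⊆ psums J.blocks := by
    simpa using psums_sum_cons_subset_psums_append (mt B.blocks_eq_nil.mp hm) I J.blocks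
  simp only [refinementTerm, hsub, List.length_cons, prod_range_succ', blockLen_append_zero,
    blockLen_append_succ]
  simp only [mul_ite, mul_zero, smul_mul_smul_comm, Composition.append_blocks, List.map_append,
    List.prod_append, mul_comm]

theorem prod_map_compositionSum {n : ℕ} (f : R⟦X⟧) (a : ℕ → A) (I : Composition n) :
    (I.blocks.map (compositionSum f a)).prod =
      ∑ J : Composition n, refinementTerm f a I.blocks J.blocks := by
  induction I using Composition.recOnSingleAppend with
  | zero => simpa [refinementTerm, psums] using (sum_composition_zero (refinementTerm f a [])).symm
  | single_append k n I ih =>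
    calc (((k + 1) :: I.blocks).map (compositionSum f a)).prod
      _ = (∑ B : Composition (k + 1), coeff B.length f • (B.blocks.map a).prod) *
            ∑ J : Composition n, refinementTerm f a I.blocks J.blocks := by
        rw [List.map_cons, List.prod_cons, ih, compositionSum]
      _ = ∑ B : Composition (k + 1), ∑ J : Composition n,
            refinementTerm f a ((k + 1) :: I.blocks) (B.append J).blocks := by
        simp only [sum_mul_sum, refinementTerm_cons_append k.succ_ne_zero]
      _ = ∑ L : Composition (k + 1 + n), refinementTerm f a ((k + 1) :: I.blocks) L.blocks := by
        rw [sum_sum_append k.succ_ne_zero fun L =>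
            refinementTerm f a ((k + 1) :: I.blocks) L.blocks,
          sum_filter_of_ne fun L _ => mem_psums_of_refinementTerm_cons_ne_zero]

end CompositionSum

section Substitution

variable {R A : Type*} [CommSemiring R] [Semiring A] [Algebra R A]

/-- The generating series `∑_{k≥1} a_k t^k`, to be substituted into series over `R`; the value
`a 0` is ignored so that there is no constant term. -/
def genSeries (a : ℕ → A) : A⟦X⟧ := X * PowerSeries.mk fun k => a (k + 1)

theorem constantCoeff_genSeries (a : ℕ → A) : constantCoeff (genSeries a) = 0 := by
  simp [genSeries]

theorem coeff_succ_genSeries (a : ℕ → A) (n : ℕ) : coeff (n + 1) (genSeries a) = a (n + 1) := by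
  rw [genSeries, coeff_succ_X_mul, coeff_mk]

/-- Substitution `f ↦ f(∑_{k≥1} a_k t^k)` of a series whose coefficients need not commute, a case
that `PowerSeries.subst` does not cover. -/
def genSubst (a : ℕ → A) : R⟦X⟧ →ₗ[R] A⟦X⟧ where
  toFun f := PowerSeries.mk (compositionSum f a)
  map_add' f g := by ext; simp [compositionSum, add_smul, sum_add_distrib]
  map_smul' r f := by ext; simp [compositionSum, mul_smul, smul_sum]

theorem coeff_genSubst (a : ℕ → A) (f : R⟦X⟧) (n : ℕ) :
    coeff n (genSubst a f) = compositionSum f a n := by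
  simp [genSubst]

theorem genSubst_one (a : ℕ → A) : genSubst a (1 : R⟦X⟧) = 1 := by
  ext n
  rw [coeff_genSubst, coeff_one]
  split_ifs with hn
  · simp [hn, compositionSum_zero]
  · exact sum_eq_zero fun K _ => by simp [coeff_one, hn]

theorem genSubst_X_mul (a : ℕ → A) (f : R⟦X⟧) :
    genSubst a (X * f) = genSeries a * genSubst a f := by
  ext (_ | n)
  · rw [coeff_genSubst, compositionSum_zero]
    simp [constantCoeff_genSeries]
  · rw [coeff_genSubst, compositionSum_succ, genSeries, mul_assoc, coeff_succ_X_mul, coeff_mul]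
    simp only [coeff_mk, coeff_genSubst]

theorem genSubst_X (a : ℕ → A) : genSubst a (X : R⟦X⟧) = genSeries a := by
  rw [← mul_one X, genSubst_X_mul, genSubst_one, mul_one]

theorem coeff_mul_congr_right {M g h : A⟦X⟧} (hM : constantCoeff M = 0) {n : ℕ}
    (hgh : ∀ k < n, coeff k g = coeff k h) : coeff n (M * g) = coeff n (M * h) := by
  rw [coeff_mul, coeff_mul]
  refine sum_congr rfl ?_
  rintro ⟨_ | i, j⟩ hij
  · simp [hM]
  · rw [hgh j (by rw [HasAntidiagonal.mem_antidiagonal] at hij; omega)]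

/-- Since multiplication by `M` raises degrees, the recursion `T (X * f) = M * T f` determines
`T f` coefficient by coefficient. -/
theorem linearMap_ext_of_map_X_mul {T T' : R⟦X⟧ →ₗ[R] A⟦X⟧} {M : A⟦X⟧}
    (hM : constantCoeff M = 0) (hone : T 1 = T' 1) (hT : ∀ f, T (X * f) = M * T f)
    (hT' : ∀ f, T' (X * f) = M * T' f) : T = T' := by
  suffices h : ∀ n f, coeff n (T f) = coeff n (T' f) from
    LinearMap.ext fun f => PowerSeries.ext fun n => h n f
  intro n
  induction n using Nat.strong_induction_on with
  | h n ih =>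
    intro f
    rw [f.eq_X_mul_shift_add_const, ← mul_one (C _), ← smul_eq_C_mul, T.map_add, T'.map_add,
      T.map_smul, T'.map_smul, hT, hT', hone, map_add, map_add,
      coeff_mul_congr_right hM fun k hk => ih k hk _]

theorem genSubst_mul (a : ℕ → A) (f g : R⟦X⟧) :
    genSubst a (f * g) = genSubst a f * genSubst a g := by
  have h : (genSubst a).comp (LinearMap.mulRight R g) =
      (LinearMap.mulRight R (genSubst a g)).comp (genSubst a) :=
    linearMap_ext_of_map_X_mul (constantCoeff_genSeries a) (by simp [genSubst_one])
      (by simp [mul_assoc, genSubst_X_mul]) (by simp [mul_assoc, genSubst_X_mul])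
  exact LinearMap.congr_fun h f

theorem compositionSum_one_add_X (a : ℕ → A) {n : ℕ} (hn : n ≠ 0) :
    compositionSum (1 + X : R⟦X⟧) a n = a n := by
  obtain ⟨n, rfl⟩ := Nat.exists_eq_succ_of_ne_zero hn
  rw [← coeff_genSubst, map_add, genSubst_one, genSubst_X, map_add, coeff_succ_genSeries]
  simp [coeff_one]

theorem genSeries_compositionSum (a : ℕ → A) {f : R⟦X⟧} (hf : constantCoeff f = 0) :
    genSeries (compositionSum f a) = genSubst a f := by
  ext (_ | n)
  · simp [coeff_genSubst, constantCoeff_genSeries, compositionSum_zero, hf]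
  · rw [coeff_succ_genSeries, coeff_genSubst]

end Substitution

section IteratedSubstitution

variable {R A : Type*} [CommRing R] [Semiring A] [Algebra R A]

theorem compositionSum_compositionSum (a : ℕ → A) {f : R⟦X⟧} (hf : constantCoeff f = 0)
    (g : R⟦X⟧) (n : ℕ) :
    compositionSum g (compositionSum f a) n = compositionSum (g.subst f) a n := by
  have hsubst : HasSubst f := HasSubst.of_constantCoeff_zero' hf
  have h : genSubst (compositionSum f a) =
      (genSubst a).comp (substAlgHom (R := R) hsubst).toLinearMap := by
    refine linearMap_ext_of_map_X_mul (constantCoeff_genSeries _) ?_ (genSubst_X_mul _) fun g => ?_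
    · simp [genSubst_one]
    · simp [substAlgHom_X, genSubst_mul, genSeries_compositionSum a hf]
  simpa [coe_substAlgHom, coeff_genSubst] using congrArg (coeff n) (LinearMap.congr_fun h g)

end IteratedSubstitution

section ExpLog

variable {R : Type*} [CommRing R] [Algebra ℚ R]

theorem one_add_X_mul_derivative_log : (1 + X) * d⁄dX R (log R) = 1 := by
  ext (_ | n)
  · simp [deriv_log]
  · simp [deriv_log, add_mul, coeff_succ_X_mul, pow_succ, coeff_one]

theorem constantCoeff_exp_subst_log : constantCoeff ((exp R).subst (log R)) = (1 : R) := by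
  have h : constantCoeff ((exp R - 1).subst (log R)) = (0 : R) :=
    constantCoeff_subst_eq_zero constantCoeff_log _ (by simp [constantCoeff_exp])
  have hone : (1 : R⟦X⟧).subst (log R) = 1 := by rw [← coe_substAlgHom HasSubst.log, map_one]
  rw [subst_sub HasSubst.log, hone, map_sub, map_one] at h
  exact sub_eq_zero.mp h

theorem exp_subst_log : (exp R).subst (log R) = 1 + X := by
  have := IsAddTorsionFree.of_module_rat R
  set L' := d⁄dX R (log R)
  set f := (exp R).subst (log R)
  have hL : (1 + X) * L' = 1 := one_add_X_mul_derivative_log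
  have hL' : L' + (1 + X) * d⁄dX R L' = 0 := by
    simpa [Derivation.leibniz, add_comm, mul_comm] using congrArg (d⁄dX R) hL
  have hf : d⁄dX R f = f * L' := by rw [derivative_subst HasSubst.log, derivative_exp]
  have hderiv : d⁄dX R (f * L') = 0 := by
    rw [Derivation.leibniz, hf, smul_eq_mul, smul_eq_mul]
    linear_combination f * L' * hL' - f * d⁄dX R L' * hL
  have hconst : f * L' = 1 := derivative.ext (by simpa using hderiv) <| by
    rw [map_mul, constantCoeff_exp_subst_log]
    simp [L', deriv_log]
  linear_combination (1 + X) * hconst - f * hL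

end ExpLog

section PowerSums

theorem prod_map_smul {R A : Type*} [CommSemiring R] [Semiring A] [Algebra R A] (c : ℕ → R)
    (a : ℕ → A) (L : List ℕ) :
    (L.map fun k => c k • a k).prod = (L.map c).prod • (L.map a).prod := by
  induction L with
  | nil => simp
  | cons k L ih => simp only [List.map_cons, List.prod_cons, ih, smul_mul_smul_comm]

theorem coeff_log_rat (l : ℕ) : coeff l (log ℚ) = (-1) ^ (l + 1) / (l : ℚ) := by
  rw [coeff_log]
  split_ifs with hl <;> simp [hl]

theorem prod_coeff_log_blockLen {n : ℕ} {I J : Composition n}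
    (h : psums I.blocks ⊆ psums J.blocks) :
    ∏ p ∈ range I.length, coeff (blockLen J.blocks I.blocks p) (log ℚ) =
      (-1) ^ (J.length - I.length) / (ellP J.blocks I.blocks : ℚ) := by
  have hsign : (-1 : ℚ) ^ (J.length + I.length) = (-1) ^ (J.length - I.length) := by
    have := length_le_of_psums_subset h
    exact neg_one_pow_congr (by grind)
  have hsum : ∑ p ∈ range I.length, (blockLen J.blocks I.blocks p + 1) = J.length + I.length := by
    simp [sum_add_distrib, sum_blockLen]
  simp only [coeff_log_rat, prod_div_distrib, prod_pow_eq_pow_sum, hsum, hsign, ellP,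
    Composition.blocks_length, Nat.cast_prod]

theorem prod_coeff_exp_blockLen_mul_inv_prod (I J : List ℕ) :
    (∏ p ∈ range I.length, coeff (blockLen J I p) (exp ℚ)) * (J.map fun k : ℕ => (k : ℚ)⁻¹).prod =
      (spP J I : ℚ)⁻¹ := by
  have hJ : (J.map fun k : ℕ => (k : ℚ)⁻¹).prod = (J.prod : ℚ)⁻¹ := by
    rw [Nat.cast_list_prod, List.prod_inv, List.map_map, Function.comp_def]
  simp [hJ, spP, coeff_exp, prod_inv_distrib, mul_comm]

variable {A : Type*} [Semiring A] [Algebra ℚ A]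

/-- The power sums of the second kind attached to a sequence `s` playing the role of the complete
functions `S_n`: the coefficient of `tⁿ` in `n·log(1 + ∑_{k≥1} s_k t^k)`. -/
def powerSum (s : ℕ → A) (n : ℕ) : A :=
  ∑ J : Composition n,
    ((-1 : ℚ) ^ (J.length - 1) * (n : ℚ) / (J.length : ℚ)) • (J.blocks.map s).prod

theorem powerSum_eq_smul_compositionSum_log (s : ℕ → A) (n : ℕ) :
    powerSum s n = (n : ℚ) • compositionSum (log ℚ) s n := by
  rw [powerSum, compositionSum, smul_sum]
  refine sum_congr rfl fun J _ => ?_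
  rw [smul_smul, coeff_log_rat]
  rcases J.length with _ | l
  · simp
  · congr 1
    rw [Nat.add_sub_cancel]
    ring

theorem eq_compositionSum_exp_powerSum (s : ℕ → A) {n : ℕ} (hn : n ≠ 0) :
    s n = compositionSum (exp ℚ) (fun k : ℕ => (k : ℚ)⁻¹ • powerSum s k) n := by
  have hlog : (fun k : ℕ => (k : ℚ)⁻¹ • powerSum s k) = compositionSum (log ℚ) s := by
    funext k
    rcases eq_or_ne k 0 with rfl | hk
    · simp [compositionSum_zero]
    · rw [powerSum_eq_smul_compositionSum_log, inv_smul_smul₀ (by exact_mod_cast hk)]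
  rw [hlog, compositionSum_compositionSum s constantCoeff_log, exp_subst_log,
    compositionSum_one_add_X s hn]

theorem prod_map_powerSum {n : ℕ} (s : ℕ → A) (I : Composition n) :
    (I.blocks.map (powerSum s)).prod =
      ∑ J : Composition n,
        if psums I.blocks ⊆ psums J.blocks then
          ((-1 : ℚ) ^ (J.length - I.length) * (I.blocks.prod : ℚ) /
              (ellP J.blocks I.blocks : ℚ)) • (J.blocks.map s).prod
        else 0 := by
  have hprod : (I.blocks.map (powerSum s)).prod =
      (I.blocks.prod : ℚ) • (I.blocks.map (compositionSum (log ℚ) s)).prod := by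
    rw [Nat.cast_list_prod, ← prod_map_smul, ← funext (powerSum_eq_smul_compositionSum_log s)]
  rw [hprod, prod_map_compositionSum, smul_sum]
  refine sum_congr rfl fun J _ => ?_
  rw [refinementTerm, smul_ite, smul_zero]
  split_ifs with h
  · rw [Composition.blocks_length, prod_coeff_log_blockLen h, smul_smul, mul_div_left_comm,
      mul_div_assoc]
  · rfl

theorem prod_map_eq_sum_powerSum {n : ℕ} (s : ℕ → A) (I : Composition n) :
    (I.blocks.map s).prod =
      ∑ J : Composition n,
        if psums I.blocks ⊆ psums J.blocks then
          ((spP J.blocks I.blocks : ℚ))⁻¹ • (J.blocks.map (powerSum s)).prod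
        else 0 := by
  have hmap : I.blocks.map s =
      I.blocks.map (compositionSum (exp ℚ) fun k : ℕ => (k : ℚ)⁻¹ • powerSum s k) :=
    List.map_congr_left fun i hi => eq_compositionSum_exp_powerSum s (I.blocks_pos hi).ne'
  simp only [hmap, prod_map_compositionSum, refinementTerm, prod_map_smul, smul_smul,
    prod_coeff_exp_blockLen_mul_inv_prod]

theorem S_phi_transition_general {n : ℕ} (s : ℕ → A) (I : Composition n) :
    ((I.blocks.map (powerSum s)).prod =
      ∑ J : Composition n,
        if psums I.blocks ⊆ psums J.blocks then
          ((-1 : ℚ) ^ (J.length - I.length) * (I.blocks.prod : ℚ) /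
              (ellP J.blocks I.blocks : ℚ)) • (J.blocks.map s).prod
        else 0) ∧
    ((I.blocks.map s).prod =
      ∑ J : Composition n,
        if psums I.blocks ⊆ psums J.blocks then
          ((spP J.blocks I.blocks : ℚ))⁻¹ • (J.blocks.map (powerSum s)).prod
        else 0) :=
  ⟨prod_map_powerSum s I, prod_map_eq_sum_powerSum s I⟩

end PowerSums

end GeneratingSeries

/-- **Transition between the bases `S^I` and `Φ^J`**: for every composition `I` of `n`,
`Φ^I = ∑_{J ⪰ I} (−1)^{ℓ(J)−ℓ(I)} (π(I)/ℓ(J,I)) S^J` and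
`S^I = ∑_{J ⪰ I} (1/sp(J,I)) Φ^J`, where `π(I)` is the product of the parts of `I`. -/
theorem S_phi_transition (n : ℕ) (I : Composition n) :
    (PhiProd I.blocks =
      ∑ J : Composition n,
        if psums I.blocks ⊆ psums J.blocks then
          ((-1 : ℚ) ^ (J.length - I.length) * (I.blocks.prod : ℚ) /
              (ellP J.blocks I.blocks : ℚ)) • SProd J.blocks
        else 0) ∧
    (SProd I.blocks =
      ∑ J : Composition n,
        if psums I.blocks ⊆ psums J.blocks then
          ((spP J.blocks I.blocks : ℚ))⁻¹ • PhiProd J.blocks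
        else 0) :=
  S_phi_transition_general S I

end

end NCSF
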